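/- Define real sequences (α_j)_{j≥0} and (γ_j)_{j≥0} by α₀ = 1, α₁ = 1/12, α_j = (6^(j−1) − 1)⁻¹ · Σ_{i=1}^{j−1} α_i α_{j−i} for j ≥ 2, and γ₀ = 1/3, γ_j = (6^j − 1)⁻¹ · Σ_{i=1}^{j} α_i γ_{j−i} for j ≥ 1. Then γ_j = 4·α_{j+1} for every natural number j. -/

import Mathlib

/-- On SG⁴, the sequences `α_j` and `γ_j` defined by the explicit recursions of
Subsection 7.3 satisfy `γ_j = 4·α_{j+1}` for all `j`. -/
theorem stmt_18 (α γ : ℕ → ℝ)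
    (hα0 : α 0 = 1) (hα1 : α 1 = 1 / 12)
    (hα : ∀ j : ℕ, 2 ≤ j →
      α j = ((6 : ℝ) ^ (j - 1) - 1)⁻¹ * ∑ i ∈ Finset.Icc 1 (j - 1), α i * α (j - i))
    (hγ0 : γ 0 = 1 / 3)
    (hγ : ∀ j : ℕ, 1 ≤ j →
      γ j = ((6 : ℝ) ^ j - 1)⁻¹ * ∑ i ∈ Finset.Icc 1 j, α i * γ (j - i)) :
    ∀ j : ℕ, γ j = 4 * α (j + 1) := by
  intro j
  induction j using Nat.strong_induction_on with
  | _ j ih =>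
    rcases Nat.eq_zero_or_pos j with rfl | hj
    · norm_num [hγ0, hα1]
    · rw [hγ j hj, hα (j + 1) (by omega), Nat.add_sub_cancel, mul_left_comm, Finset.mul_sum _ _ (4 : ℝ)]
      congr 1
      refine Finset.sum_congr rfl fun i hi => ?_
      rw [Finset.mem_Icc] at hi
      rw [ih (j - i) (by omega), Nat.sub_add_comm hi.2, mul_left_comm]
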